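/- Define F : [0,1] → ℝ by F(t) = 0.68145/√(1 − 0.53562·t). Then for every r ∈ [0,1], F(r)·(1 − 0.3947·∫₀^r F(t) dt) ≥ 0.68. -/

import Mathlib

/-!
For `F t = a / √(1 - b t)` the integral of `F` is elementary, and with `s = √(1 - b r)` and
`k = 2 a c / b` one finds `F r * (1 - c * ∫₀ʳ F) = a * (k - (k - 1) / s)`. Here `k ≈ 1.0043`
exceeds `1`, so this decreases in `r`, and its value at `r = 1` is about `0.68007`.
-/

noncomputable def F (t : ℝ) : ℝ := 0.68145 / Real.sqrt (1 - 0.53562 * t)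

theorem integral_inv_sqrt {x y : ℝ} (hx : 0 ≤ x) (hy : 0 ≤ y) :
    ∫ t in x..y, (√t)⁻¹ = 2 * (√y - √x) := by
  have inv_sqrt_eq_rpow : ∀ t ∈ Set.uIcc x y, (√t)⁻¹ = t ^ (-(1 / 2) : ℝ) := by
    intro t ht
    have ht₀ : 0 ≤ t := (le_min hx hy).trans ht.1
    rw [Real.sqrt_eq_rpow, Real.rpow_neg ht₀]
  rw [intervalIntegral.integral_congr inv_sqrt_eq_rpow, integral_rpow (Or.inl (by norm_num)),
    show (-(1 / 2) + 1 : ℝ) = 1 / 2 by norm_num, ← Real.sqrt_eq_rpow, ← Real.sqrt_eq_rpow]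
  ring

theorem mul_integral_inv_sqrt_one_sub_mul {b r : ℝ} (hr : b * r ≤ 1) :
    b * ∫ t in (0 : ℝ)..r, (√(1 - b * t))⁻¹ = 2 * (1 - √(1 - b * r)) := by
  rw [intervalIntegral.mul_integral_comp_sub_mul (f := fun x => (√x)⁻¹), mul_zero, sub_zero,
    integral_inv_sqrt (sub_nonneg.2 hr) zero_le_one, Real.sqrt_one]

theorem integral_div_sqrt_one_sub_mul (a : ℝ) {b r : ℝ} (hb : b ≠ 0) (hr : b * r ≤ 1) :
    ∫ t in (0 : ℝ)..r, a / √(1 - b * t) = 2 * a / b * (1 - √(1 - b * r)) := by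
  simp only [div_eq_mul_inv a, intervalIntegral.integral_const_mul]
  rw [eq_div_of_mul_eq hb ((mul_comm _ _).trans (mul_integral_inv_sqrt_one_sub_mul hr))]
  ring

theorem div_sqrt_mul_one_sub_mul_integral (a c : ℝ) {b r : ℝ} (hb : b ≠ 0) (hr : b * r < 1) :
    a / √(1 - b * r) * (1 - c * ∫ t in (0 : ℝ)..r, a / √(1 - b * t)) =
      a * (2 * a * c / b - (2 * a * c / b - 1) / √(1 - b * r)) := by
  have hs : √(1 - b * r) ≠ 0 := (Real.sqrt_pos.2 (sub_pos.2 hr)).ne'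
  rw [integral_div_sqrt_one_sub_mul a hb hr.le]
  field_simp
  ring

theorem antitoneOn_div_sqrt_mul_one_sub_mul_integral {a b c : ℝ} (ha : 0 ≤ a) (hb : 0 < b)
    (hbc : b ≤ 2 * a * c) :
    AntitoneOn (fun r => a / √(1 - b * r) * (1 - c * ∫ t in (0 : ℝ)..r, a / √(1 - b * t)))
      {r | b * r < 1} := by
  intro x hx y hy hxy
  have hk : 0 ≤ 2 * a * c / b - 1 := sub_nonneg.2 ((one_le_div hb).2 hbc)
  have hs : 0 < √(1 - b * y) := Real.sqrt_pos.2 (sub_pos.2 hy)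
  simp only [div_sqrt_mul_one_sub_mul_integral a c hb.ne' hx,
    div_sqrt_mul_one_sub_mul_integral a c hb.ne' hy]
  gcongr

theorem F_attenuation_bound_at_one :
    0.68 ≤ F 1 * (1 - 0.3947 * ∫ t in (0 : ℝ)..1, F t) := by
  have hs : 0.6814 ≤ √(1 - 0.53562 * 1) := Real.le_sqrt_of_sq_le (by norm_num)
  simp only [F]
  rw [div_sqrt_mul_one_sub_mul_integral _ _ (by norm_num) (by norm_num)]
  calc (0.68 : ℝ)
      ≤ 0.68145 * (2 * 0.68145 * 0.3947 / 0.53562 -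
          (2 * 0.68145 * 0.3947 / 0.53562 - 1) / 0.6814) := by norm_num
    _ ≤ _ := by gcongr

theorem F_attenuation_bound_general {r : ℝ} (hr : r ≤ 1) :
    0.68 ≤ F r * (1 - 0.3947 * ∫ t in (0 : ℝ)..r, F t) := by
  have hanti : AntitoneOn (fun r => F r * (1 - 0.3947 * ∫ t in (0 : ℝ)..r, F t))
      {r | 0.53562 * r < 1} :=
    antitoneOn_div_sqrt_mul_one_sub_mul_integral (by norm_num) (by norm_num) (by norm_num)
  have one_mem : (1 : ℝ) ∈ {r : ℝ | 0.53562 * r < 1} := by norm_num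
  have r_mem : r ∈ {r : ℝ | 0.53562 * r < 1} :=
    (mul_le_mul_of_nonneg_left hr (by norm_num)).trans_lt one_mem
  exact F_attenuation_bound_at_one.trans (hanti r_mem one_mem hr)

theorem F_attenuation_bound :
    ∀ r ∈ Set.Icc (0:ℝ) 1, 0.68 ≤ F r * (1 - 0.3947 * ∫ t in (0:ℝ)..r, F t) :=
  fun _ hr => F_attenuation_bound_general hr.2
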